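/- Let Ω ⊆ ℂ be a connected open set, let C₁, C₂ : Ω → ℂ be continuous, and let v : Ω → ℂ be continuously differentiable (over ℝ) with ∂̄v(z) + C₁(z)·v(z) + C₂(z)·conj(v(z)) = 0 for all z ∈ Ω. If v is not identically zero, then every zero of v is isolated: for every z₀ ∈ Ω with v(z₀) = 0 there is a punctured neighbourhood of z₀ in Ω on which v has no zeros. -/

import Mathlib

open Complex Metric

/-- The Cauchy–Riemann operator `∂̄v(z) = (1/2)(∂v/∂x + i ∂v/∂y)`. -/
noncomputable def dbar (v : ℂ → ℂ) (z : ℂ) : ℂ :=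
  (1 / 2) * (fderiv ℝ v z 1 + Complex.I * fderiv ℝ v z Complex.I)

open MeasureTheory Set Filter Topology
open scoped ComplexConjugate ContDiff Convolution Interval Real

/-!
Near a point where `∂̄v = O(v)` the quotient `a = ∂̄v / v` is bounded. Its Cauchy transform `φ` is
continuous and solves `∂̄φ = a` in the weak sense, so formally `∂̄(v e^{-φ}) = 0`. To avoid weak
derivatives, replace `a` by mollifications `g`: their Cauchy transforms `ψ` are smooth and converge
uniformly to `φ`, while `∂̄(v e^{-ψ}) = (a - g) v e^{-ψ}` tends to zero in `L¹`. Green's formula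
on rectangles and Morera's theorem then show that the limit `v e^{-φ}` is holomorphic, and it has
the same zeros as `v`. So near each point `v` either vanishes identically or has at most an isolated
zero, and by connectedness the first alternative would force `v = 0` everywhere.
-/

section Dbar

variable {f g : ℂ → ℂ} {z : ℂ} {U : Set ℂ}

lemma conj_mul_dbar (f : ℂ → ℂ) (z c : ℂ) :
    conj c * dbar f z = (1 / 2) * (fderiv ℝ f z c + I * fderiv ℝ f z (I * c)) := by
  have hfderiv (x y : ℝ) : fderiv ℝ f z (x + y * I) =
      x * fderiv ℝ f z 1 + y * fderiv ℝ f z I := by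
    have h : fderiv ℝ f z (x • (1 : ℂ) + y • I) = x • fderiv ℝ f z 1 + y • fderiv ℝ f z I := by
      rw [map_add, ContinuousLinearMap.map_smul, ContinuousLinearMap.map_smul]
    simpa only [real_smul, mul_one] using h
  have hc : fderiv ℝ f z c = c.re * fderiv ℝ f z 1 + c.im * fderiv ℝ f z I := by
    rw [← hfderiv, re_add_im]
  have hIc : fderiv ℝ f z (I * c) = -c.im * fderiv ℝ f z 1 + c.re * fderiv ℝ f z I := by
    rw [← ofReal_neg, ← hfderiv]
    congr 1
    apply Complex.ext <;> simp
  have hconj : conj c = c.re - c.im * I := by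
    apply Complex.ext <;> simp
  rw [hc, hIc, hconj, dbar]
  linear_combination (-(c.im : ℂ) / 2 * fderiv ℝ f z I) * I_mul_I

lemma dbar_mul (hf : DifferentiableAt ℝ f z) (hg : DifferentiableAt ℝ g z) :
    dbar (fun w => f w * g w) z = dbar f z * g z + f z * dbar g z := by
  simp only [dbar, fderiv_fun_mul hf hg, add_apply, smul_apply, smul_eq_mul]
  ring

lemma dbar_cexp (hf : DifferentiableAt ℝ f z) :
    dbar (fun w => exp (f w)) z = exp (f z) * dbar f z := by
  simp only [dbar, hf.hasFDerivAt.cexp.fderiv, smul_apply, smul_eq_mul]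
  ring

lemma dbar_neg (f : ℂ → ℂ) (z : ℂ) : dbar (fun w => -f w) z = -dbar f z := by
  simp only [dbar, fderiv_fun_neg, neg_apply]
  ring

lemma dbar_comp_const_sub (hf : Differentiable ℝ f) (w z : ℂ) :
    dbar (fun t => f (w - t)) z = -dbar f (w - z) := by
  have h : HasFDerivAt (fun t => f (w - t)) _ z :=
    (hf (w - z)).hasFDerivAt.comp z ((hasFDerivAt_id z).const_sub w)
  simp only [dbar, h.fderiv, ContinuousLinearMap.comp_apply, neg_apply,
    ContinuousLinearMap.id_apply, map_neg]
  ring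

lemma continuousOn_dbar (hf : ContDiffOn ℝ 1 f U) (hU : IsOpen U) : ContinuousOn (dbar f) U := by
  have h : ContinuousOn (fderiv ℝ f) U := hf.continuousOn_fderiv_of_isOpen hU le_rfl
  unfold dbar
  fun_prop

end Dbar

section Morera

variable {ι : Type*} {l : Filter ι} {U : Set ℂ}

lemma isCompact_rectangle (z w : ℂ) : IsCompact (Rectangle z w) :=
  isCompact_uIcc.reProdIm isCompact_uIcc

lemma norm_intervalIntegral_intervalIntegral_le {E : Type*} [NormedAddCommGroup E]
    [NormedSpace ℝ E] {F : ℂ → E} {z w : ℂ} (hF : IntegrableOn F (Rectangle z w)) :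
    ‖∫ x : ℝ in z.re..w.re, ∫ y : ℝ in z.im..w.im, F (x + y * I)‖ ≤
      ∫ ζ in Rectangle z w, ‖F ζ‖ := by
  set e := measurableEquivRealProd.symm
  have he : MeasurePreserving e := volume_preserving_equiv_real_prod.symm
  have hxy (x y : ℝ) : (x : ℂ) + y * I = e (x, y) := by
    rw [measurableEquivRealProd_symm_apply, mk_eq_add_mul_I]
  have hsub : Ι z.re w.re ×ˢ Ι z.im w.im ⊆ e ⁻¹' Rectangle z w :=
    fun p hp => mem_reProdIm.2 ⟨uIoc_subset_uIcc hp.1, uIoc_subset_uIcc hp.2⟩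
  have hFe : IntegrableOn (fun p => F (e p)) (e ⁻¹' Rectangle z w) :=
    (he.integrableOn_comp_preimage e.measurableEmbedding).2 hF
  calc ‖∫ x : ℝ in z.re..w.re, ∫ y : ℝ in z.im..w.im, F (x + y * I)‖
      = ‖∫ x in Ι z.re w.re, ∫ y in Ι z.im w.im, F (x + y * I)‖ := by
        simp only [intervalIntegral.intervalIntegral_eq_integral_uIoc, integral_smul, norm_smul]
        split_ifs <;> simp
    _ = ‖∫ p in Ι z.re w.re ×ˢ Ι z.im w.im, F (e p)‖ := by
        rw [Measure.volume_eq_prod, setIntegral_prod _ (hFe.mono_set hsub)]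
        simp only [hxy]
    _ ≤ ∫ p in Ι z.re w.re ×ˢ Ι z.im w.im, ‖F (e p)‖ := norm_integral_le_integral_norm _
    _ ≤ ∫ p in e ⁻¹' Rectangle z w, ‖F (e p)‖ :=
        setIntegral_mono_set hFe.norm (.of_forall fun _ => norm_nonneg _) hsub.eventuallyLE
    _ = ∫ ζ in Rectangle z w, ‖F ζ‖ :=
        he.setIntegral_preimage_emb e.measurableEmbedding (fun ζ => ‖F ζ‖) _

lemma norm_wedgeIntegral_add_wedgeIntegral_le {f : ℂ → ℂ} {z w : ℂ} (hU : IsOpen U)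
    (hf : ContDiffOn ℝ 1 f U) (hzw : Rectangle z w ⊆ U) :
    ‖wedgeIntegral z w f + wedgeIntegral w z f‖ ≤ 2 * ∫ ζ in Rectangle z w, ‖dbar f ζ‖ := by
  have hdbar (ζ : ℂ) : I • fderiv ℝ f ζ 1 - fderiv ℝ f ζ I = 2 * I * dbar f ζ := by
    rw [dbar, smul_eq_mul]
    linear_combination (-fderiv ℝ f ζ I) * I_mul_I
  have hint : IntegrableOn (fun ζ => 2 * I * dbar f ζ) (Rectangle z w) :=
    (continuousOn_const.mul ((continuousOn_dbar hf hU).mono hzw)).integrableOn_compact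
      (isCompact_rectangle z w)
  rw [wedgeIntegral_add_wedgeIntegral_eq, integral_boundary_rect_of_differentiableOn_real f z w
    ((hf.differentiableOn one_ne_zero).mono hzw) (by simpa only [hdbar, Rectangle] using hint)]
  simp only [hdbar]
  refine (norm_intervalIntegral_intervalIntegral_le hint).trans_eq ?_
  simp only [norm_mul, norm_I, Complex.norm_ofNat, mul_one, integral_const_mul]

lemma tendsto_wedgeIntegral {E : Type*} [NormedAddCommGroup E] [NormedSpace ℂ E]
    [l.IsCountablyGenerated] {F : ι → ℂ → E} {f : ℂ → E} {z w : ℂ}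
    (hF : ∀ i, ContinuousOn (F i) (Rectangle z w))
    (hlim : TendstoUniformlyOn F f l (Rectangle z w)) :
    Tendsto (fun i => wedgeIntegral z w (F i)) l (𝓝 (wedgeIntegral z w f)) := by
  have hre : ∀ x ∈ [[z.re, w.re]], (x : ℂ) + z.im * I ∈ Rectangle z w := fun x hx =>
    mem_reProdIm.2 (by simpa using hx)
  have him : ∀ y ∈ [[z.im, w.im]], (w.re : ℂ) + y * I ∈ Rectangle z w := fun y hy =>
    mem_reProdIm.2 (by simpa using hy)
  refine .add ?_ (.const_smul ?_ I)
  · exact TendstoUniformlyOn.tendsto_intervalIntegral_of_continuousOn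
      (.of_forall fun i => (hF i).comp (by fun_prop) hre) ((hlim.comp _).mono hre)
  · exact TendstoUniformlyOn.tendsto_intervalIntegral_of_continuousOn
      (.of_forall fun i => (hF i).comp (by fun_prop) him) ((hlim.comp _).mono him)

theorem differentiableOn_of_tendstoLocallyUniformlyOn_of_tendsto_integral_norm_dbar
    [l.NeBot] [l.IsCountablyGenerated] {F : ι → ℂ → ℂ} {f : ℂ → ℂ} (hU : IsOpen U)
    (hF : ∀ i, ContDiffOn ℝ 1 (F i) U) (hlim : TendstoLocallyUniformlyOn F f l U)
    (hdbar : ∀ K ⊆ U, IsCompact K → Tendsto (fun i => ∫ z in K, ‖dbar (F i) z‖) l (𝓝 0)) :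
    DifferentiableOn ℂ f U := by
  rw [← isConservativeOn_and_continuousOn_iff_isDifferentiableOn hU]
  refine ⟨fun z w hzw => ?_,
    hlim.continuousOn (Frequently.of_forall fun i => (hF i).continuousOn)⟩
  have hwz : Rectangle w z = Rectangle z w := by
    simp only [Rectangle, uIcc_comm]
  have hunif : TendstoUniformlyOn F f l (Rectangle z w) :=
    (tendstoLocallyUniformlyOn_iff_forall_isCompact hU).1 hlim _ hzw (isCompact_rectangle z w)
  have hcont (i : ι) : ContinuousOn (F i) (Rectangle z w) := (hF i).continuousOn.mono hzw
  have hboundary : Tendsto (fun i => wedgeIntegral z w (F i) + wedgeIntegral w z (F i)) l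
      (𝓝 (wedgeIntegral z w f + wedgeIntegral w z f)) :=
    (tendsto_wedgeIntegral hcont hunif).add
      (tendsto_wedgeIntegral (by rwa [hwz]) (by rwa [hwz]))
  have hzero : Tendsto (fun i => wedgeIntegral z w (F i) + wedgeIntegral w z (F i)) l (𝓝 0) :=
    squeeze_zero_norm (fun i => norm_wedgeIntegral_add_wedgeIntegral_le hU (hF i) hzw)
      (by simpa using (hdbar _ hzw (isCompact_rectangle z w)).const_mul 2)
  exact add_eq_zero_iff_eq_neg.1 (tendsto_nhds_unique hboundary hzero)

end Morera

section CauchyTransform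

/-- The fundamental solution `1 / (π z)` of `∂̄`. -/
noncomputable def cauchyKernel (z : ℂ) : ℂ := (π * z)⁻¹

/-- The solid Cauchy transform `w ↦ ∫ f(w - z) / (π z)`, a right inverse of `∂̄`. It is encoded as
the convolution of the Cauchy kernel with `f`, so its value at `w` is junk unless the integrand is
integrable. -/
noncomputable def cauchyTransform (f : ℂ → ℂ) : ℂ → ℂ :=
  cauchyKernel ⋆[ContinuousLinearMap.mul ℝ ℂ, volume] f

variable {ι : Type*} {l : Filter ι} {f g : ℂ → ℂ} {M ρ : ℝ}

lemma cauchyTransform_apply (f : ℂ → ℂ) (w : ℂ) :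
    cauchyTransform f w = ∫ z, cauchyKernel z * f (w - z) := rfl

lemma norm_cauchyKernel (z : ℂ) : ‖cauchyKernel z‖ = (π * ‖z‖)⁻¹ := by
  simp [cauchyKernel, abs_of_pos Real.pi_pos]

lemma measurable_cauchyKernel : Measurable cauchyKernel := by
  unfold cauchyKernel
  fun_prop

lemma locallyIntegrable_cauchyKernel : LocallyIntegrable cauchyKernel := by
  refine locallyIntegrable_of_norm_le_rpow (C := π⁻¹) (α := 1) (by simp) (by simp) ?_
    measurable_cauchyKernel.aestronglyMeasurable
  filter_upwards with z
  rw [norm_cauchyKernel, Real.rpow_neg_one, mul_inv]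

lemma integrableOn_ball_cauchyKernel (c : ℂ) (ρ : ℝ) : IntegrableOn cauchyKernel (ball c ρ) :=
  (locallyIntegrable_cauchyKernel.integrableOn_isCompact (isCompact_closedBall c ρ)).mono_set
    ball_subset_closedBall

lemma integral_norm_cauchyKernel_ball (hρ : 0 ≤ ρ) :
    ∫ z in ball 0 ρ, ‖cauchyKernel z‖ = 2 * ρ := by
  have hball (z : ℂ) : (ball 0 ρ).indicator (fun z => ‖cauchyKernel z‖) z =
      (Iio ρ).indicator (fun r => (π * r)⁻¹) ‖z‖ := by
    simp only [indicator, mem_ball_zero_iff, mem_Iio, norm_cauchyKernel]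
  have hradial :
      ∫ r in Ioi (0 : ℝ), r ^ 1 • (Iio ρ).indicator (fun r => (π * r)⁻¹) r = ρ * π⁻¹ := by
    calc ∫ r in Ioi (0 : ℝ), r ^ 1 • (Iio ρ).indicator (fun r => (π * r)⁻¹) r
        = ∫ r in Ioi (0 : ℝ), (Iio ρ).indicator (fun _ => π⁻¹) r := by
          refine setIntegral_congr_fun measurableSet_Ioi fun r hr => ?_
          have hr0 : r ≠ 0 := (mem_Ioi.1 hr).ne'
          simp only [indicator, smul_eq_mul]
          split_ifs
          · field_simp
          · ring
      _ = ρ * π⁻¹ := by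
          rw [setIntegral_indicator measurableSet_Iio, Ioi_inter_Iio, setIntegral_const]
          simp [hρ]
  have hvol : volume.real (ball (0 : ℂ) 1) = π := by
    simp [Measure.real, Complex.volume_ball]
  rw [← integral_indicator measurableSet_ball]
  simp only [hball]
  rw [integral_fun_norm_addHaar, Complex.finrank_real_complex, hradial, hvol]
  simp only [nsmul_eq_mul, smul_eq_mul, Nat.cast_ofNat]
  field_simp

lemma norm_cauchyKernel_mul_le (hρ : 0 < ρ) (hM : ∀ z, ‖f z‖ ≤ M) (w z : ℂ) :
    ‖cauchyKernel z * f (w - z)‖ ≤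
      (ball 0 ρ).indicator (fun z => ‖cauchyKernel z‖ * M) z + (π * ρ)⁻¹ * ‖f (w - z)‖ := by
  rw [norm_mul]
  by_cases hz : z ∈ ball 0 ρ
  · rw [indicator_of_mem hz]
    have hle : ‖cauchyKernel z‖ * ‖f (w - z)‖ ≤ ‖cauchyKernel z‖ * M := by
      gcongr
      exact hM _
    exact hle.trans (le_add_of_nonneg_right (by positivity))
  · have hρz : ρ ≤ ‖z‖ := by simpa using hz
    rw [indicator_of_notMem hz, zero_add, norm_cauchyKernel]
    gcongr

lemma integrable_indicator_ball_norm_cauchyKernel_mul (ρ M : ℝ) :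
    Integrable ((ball 0 ρ).indicator fun z => ‖cauchyKernel z‖ * M) :=
  (integrable_indicator_iff measurableSet_ball).2
    ((integrableOn_ball_cauchyKernel 0 ρ).norm.mul_const M)

lemma integrable_cauchyKernel_mul (hf : Integrable f) (hM : ∀ z, ‖f z‖ ≤ M) (w : ℂ) :
    Integrable (fun z => cauchyKernel z * f (w - z)) :=
  ((integrable_indicator_ball_norm_cauchyKernel_mul 1 M).add
    ((hf.comp_sub_left w).norm.const_mul (π * 1)⁻¹)).mono'
    (measurable_cauchyKernel.aestronglyMeasurable.mul (hf.comp_sub_left w).aestronglyMeasurable)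
    (.of_forall (norm_cauchyKernel_mul_le one_pos hM w))

lemma cauchyTransform_sub (hf : Integrable f) (hfM : ∀ z, ‖f z‖ ≤ M) (hg : Integrable g)
    (hgM : ∀ z, ‖g z‖ ≤ M) (w : ℂ) :
    cauchyTransform (fun z => f z - g z) w = cauchyTransform f w - cauchyTransform g w := by
  simp only [cauchyTransform_apply, mul_sub]
  exact integral_sub (integrable_cauchyKernel_mul hf hfM w) (integrable_cauchyKernel_mul hg hgM w)

lemma norm_cauchyTransform_le (hρ : 0 < ρ) (hf : Integrable f) (hM : ∀ z, ‖f z‖ ≤ M) (w : ℂ) :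
    ‖cauchyTransform f w‖ ≤ 2 * ρ * M + (π * ρ)⁻¹ * ∫ z, ‖f z‖ := by
  have hnear : Integrable ((ball 0 ρ).indicator fun z => ‖cauchyKernel z‖ * M) :=
    integrable_indicator_ball_norm_cauchyKernel_mul ρ M
  have hfar : Integrable (fun z => (π * ρ)⁻¹ * ‖f (w - z)‖) :=
    (hf.comp_sub_left w).norm.const_mul _
  refine (norm_integral_le_of_norm_le (hnear.add hfar)
    (.of_forall (norm_cauchyKernel_mul_le hρ hM w))).trans_eq ?_
  rw [integral_add' hnear hfar, integral_indicator measurableSet_ball, integral_mul_const,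
    integral_norm_cauchyKernel_ball hρ.le, integral_const_mul,
    integral_sub_left_eq_self (fun z => ‖f z‖)]

theorem tendstoUniformly_cauchyTransform {F : ι → ℂ → ℂ} (hF : ∀ i, Integrable (F i))
    (hFM : ∀ i z, ‖F i z‖ ≤ M) (hf : Integrable f) (hfM : ∀ z, ‖f z‖ ≤ M)
    (hlim : Tendsto (fun i => ∫ z, ‖F i z - f z‖) l (𝓝 0)) :
    TendstoUniformly (fun i => cauchyTransform (F i)) (cauchyTransform f) l := by
  rw [Metric.tendstoUniformly_iff]
  intro ε hε
  obtain ⟨ρ, hρε, hρ⟩ : ∃ ρ : ℝ, 2 * ρ * (M + M) < ε ∧ 0 < ρ := by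
    have hρ : Tendsto (fun ρ : ℝ => 2 * ρ * (M + M)) (𝓝[>] 0) (𝓝 0) :=
      (Continuous.tendsto' (by fun_prop) 0 0 (by simp)).mono_left nhdsWithin_le_nhds
    exact ((hρ.eventually_lt_const hε).and self_mem_nhdsWithin).exists
  have hbound : Tendsto (fun i => 2 * ρ * (M + M) + (π * ρ)⁻¹ * ∫ z, ‖F i z - f z‖) l
      (𝓝 (2 * ρ * (M + M))) := by
    simpa using (hlim.const_mul (π * ρ)⁻¹).const_add (2 * ρ * (M + M))
  filter_upwards [hbound.eventually_lt_const hρε] with i hi w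
  rw [dist_comm, dist_eq_norm, ← cauchyTransform_sub (hF i) (hFM i) hf hfM]
  exact (norm_cauchyTransform_le hρ ((hF i).sub hf)
    (fun z => norm_sub_le_of_le (hFM i z) (hfM z)) w).trans_lt hi

end CauchyTransform

section Pompeiu

variable {E F : Type*} [NormedAddCommGroup E] [NormedSpace ℝ E] [NormedAddCommGroup F]
  [NormedSpace ℝ F]

lemma integral_Ioi_fderiv_smul [CompleteSpace F] {f : E → F} (hf : ContDiff ℝ 1 f)
    (hfc : HasCompactSupport f) {c : E} (hc : c ≠ 0) :
    ∫ r in Ioi (0 : ℝ), fderiv ℝ f (r • c) c = -f 0 := by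
  have hderiv (r : ℝ) : deriv (fun r : ℝ => f (r • c)) r = fderiv ℝ f (r • c) c := by
    have hray : HasDerivAt (fun r : ℝ => r • c) c r := by
      simpa using (hasDerivAt_id r).smul_const c
    exact ((hf.differentiable one_ne_zero _).hasFDerivAt.comp_hasDerivAt r hray).deriv
  have hcompact : HasCompactSupport fun r : ℝ => f (r • c) :=
    hfc.comp_isClosedEmbedding (isClosedEmbedding_smul_left hc)
  have hray : ContDiff ℝ 1 fun r : ℝ => f (r • c) := hf.comp (by fun_prop)
  simpa only [hderiv, zero_smul] using hcompact.integral_Ioi_deriv_eq hray 0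

lemma intervalIntegral_fderiv_smul_cexp [CompleteSpace F] {f : ℂ → F} (hf : ContDiff ℝ 1 f) {r : ℝ}
    (hr : r ≠ 0) :
    ∫ θ : ℝ in -π..π, fderiv ℝ f (r • exp (θ * I)) (I * exp (θ * I)) = 0 := by
  have hderiv (θ : ℝ) : HasDerivAt (fun θ : ℝ => f (r • exp (θ * I)))
      (r • fderiv ℝ f (r • exp (θ * I)) (I * exp (θ * I))) θ := by
    have hcircle : HasDerivAt (fun θ : ℝ => r • exp (θ * I)) (r • (I * exp (θ * I))) θ := by
      simpa [mul_comm] using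
        (((hasDerivAt_id θ).ofReal_comp.mul_const I).cexp).fun_const_smul r
    rw [← ContinuousLinearMap.map_smul]
    exact (hf.differentiable one_ne_zero _).hasFDerivAt.comp_hasDerivAt θ hcircle
  have hcont : Continuous fun θ : ℝ => r • fderiv ℝ f (r • exp (θ * I)) (I * exp (θ * I)) := by
    have := hf.continuous_fderiv one_ne_zero
    fun_prop
  have hends : exp ((-π : ℝ) * I) = exp (π * I) := by
    simp [exp_neg]
  have hzero : ∫ θ : ℝ in -π..π, r • fderiv ℝ f (r • exp (θ * I)) (I * exp (θ * I)) = 0 := by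
    rw [intervalIntegral.integral_eq_sub_of_hasDerivAt (fun θ _ => hderiv θ)
      (hcont.intervalIntegrable _ _), hends, sub_self]
  rw [intervalIntegral.integral_smul] at hzero
  exact (smul_eq_zero.1 hzero).resolve_left hr

lemma integrableOn_polarCoord_target {G : Type*} [NormedAddCommGroup G] {u : ℝ × ℝ → G}
    (hu : Continuous u) {R : ℝ} (hR : ∀ p : ℝ × ℝ, R < p.1 → u p = 0) :
    IntegrableOn u polarCoord.target := by
  refine (hu.continuousOn.integrableOn_compact
    (isCompact_Icc.prod isCompact_Icc : IsCompact (Icc 0 R ×ˢ Icc (-π) π))).of_forall_sdiff_eq_zero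
    polarCoord.open_target.measurableSet fun p hp => hR p ?_
  by_contra! hpR
  exact hp.2 ⟨⟨le_of_lt hp.1.1, hpR⟩, Ioo_subset_Icc_self hp.1.2⟩

lemma integrableOn_polarCoord_target_fderiv {f : ℂ → F} (hf : ContDiff ℝ 1 f)
    (hfc : HasCompactSupport f) {c : ℝ → ℂ} (hc : Continuous c) :
    IntegrableOn (fun p : ℝ × ℝ => fderiv ℝ f (p.1 • exp (p.2 * I)) (c p.2))
      polarCoord.target := by
  obtain ⟨R, hR⟩ := (hfc.fderiv ℝ).isCompact.isBounded.exists_norm_le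
  have hcont : Continuous fun p : ℝ × ℝ => fderiv ℝ f (p.1 • exp (p.2 * I)) (c p.2) := by
    have := hf.continuous_fderiv one_ne_zero
    fun_prop
  refine integrableOn_polarCoord_target hcont (R := R) fun p hp => ?_
  have hout : p.1 • exp (p.2 * I) ∉ tsupport (fderiv ℝ f) := fun hmem => by
    have hle := hR _ hmem
    rw [norm_smul, norm_exp_ofReal_mul_I, mul_one, Real.norm_eq_abs] at hle
    exact hp.not_ge ((le_abs_self _).trans hle)
  rw [image_eq_zero_of_notMem_tsupport hout, zero_apply]

lemma integral_polarCoord_target_fderiv_radial [CompleteSpace F] {f : ℂ → F} (hf : ContDiff ℝ 1 f)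
    (hfc : HasCompactSupport f) :
    ∫ p in polarCoord.target, fderiv ℝ f (p.1 • exp (p.2 * I)) (exp (p.2 * I)) =
      -(2 * π) • f 0 := by
  have hint := integrableOn_polarCoord_target_fderiv hf hfc
    (c := fun θ => exp (θ * I)) (by fun_prop)
  rw [polarCoord_target, IntegrableOn, Measure.volume_eq_prod, ← Measure.prod_restrict] at hint
  rw [polarCoord_target, Measure.volume_eq_prod, ← Measure.prod_restrict, integral_prod_symm _ hint]
  simp only [integral_Ioi_fderiv_smul hf hfc (exp_ne_zero _), setIntegral_const]
  simp [two_mul, Real.pi_pos.le, add_smul]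

lemma integral_polarCoord_target_fderiv_angular [CompleteSpace F] {f : ℂ → F} (hf : ContDiff ℝ 1 f)
    (hfc : HasCompactSupport f) :
    ∫ p in polarCoord.target, fderiv ℝ f (p.1 • exp (p.2 * I)) (I * exp (p.2 * I)) = 0 := by
  have hint := integrableOn_polarCoord_target_fderiv hf hfc
    (c := fun θ => I * exp (θ * I)) (by fun_prop)
  rw [polarCoord_target, Measure.volume_eq_prod] at hint ⊢
  rw [setIntegral_prod _ hint]
  refine setIntegral_eq_zero_of_forall_eq_zero fun r hr => ?_
  rw [← integral_Ioc_eq_integral_Ioo, ← intervalIntegral.integral_of_le (by linarith [Real.pi_pos])]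
  exact intervalIntegral_fderiv_smul_cexp hf (mem_Ioi.1 hr).ne'

lemma smul_cauchyKernel_mul_dbar (f : ℂ → ℂ) {r : ℝ} (hr : r ≠ 0) (θ : ℝ) :
    r • (cauchyKernel (r • exp (θ * I)) * dbar f (r • exp (θ * I))) =
      (2 * π : ℂ)⁻¹ * (fderiv ℝ f (r • exp (θ * I)) (exp (θ * I)) +
        I * fderiv ℝ f (r • exp (θ * I)) (I * exp (θ * I))) := by
  have hinv : (exp (θ * I))⁻¹ = conj (exp (θ * I)) := by
    rw [← exp_conj, ← exp_neg]
    simp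
  have hkernel : r • cauchyKernel (r • exp (θ * I)) = (π : ℂ)⁻¹ * conj (exp (θ * I)) := by
    have hr' : (r : ℂ) ≠ 0 := ofReal_ne_zero.2 hr
    rw [← hinv, cauchyKernel, real_smul, real_smul]
    field_simp
  rw [← smul_mul_assoc, hkernel, mul_assoc, conj_mul_dbar]
  ring

/- In polar coordinates `cauchyKernel z * dbar f z` splits into a radial derivative, which
integrates to `-f 0` along each ray, and an angular derivative, which integrates to zero along each
circle. -/
theorem integral_cauchyKernel_mul_dbar {f : ℂ → ℂ} (hf : ContDiff ℝ 1 f)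
    (hfc : HasCompactSupport f) : ∫ z, cauchyKernel z * dbar f z = -f 0 := by
  have hpolar : ∫ p in polarCoord.target, p.1 • (cauchyKernel (p.1 • exp (p.2 * I)) *
      dbar f (p.1 • exp (p.2 * I))) = ∫ z, cauchyKernel z * dbar f z := by
    rw [← Complex.integral_comp_polarCoord_symm]
    simp only [Complex.polarCoord_symm_apply, exp_mul_I, real_smul, ofReal_cos, ofReal_sin]
  have hradial : IntegrableOn (fun p : ℝ × ℝ => fderiv ℝ f (p.1 • exp (p.2 * I)) (exp (p.2 * I)))
      polarCoord.target :=
    integrableOn_polarCoord_target_fderiv hf hfc (c := fun θ => exp (θ * I)) (by fun_prop)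
  have hangular : IntegrableOn
      (fun p : ℝ × ℝ => fderiv ℝ f (p.1 • exp (p.2 * I)) (I * exp (p.2 * I))) polarCoord.target :=
    integrableOn_polarCoord_target_fderiv hf hfc (c := fun θ => I * exp (θ * I)) (by fun_prop)
  rw [← hpolar, setIntegral_congr_fun polarCoord.open_target.measurableSet
    fun p hp => smul_cauchyKernel_mul_dbar f (mem_Ioi.1 hp.1).ne' p.2, integral_const_mul,
    integral_add hradial (hangular.const_mul I), integral_const_mul,
    integral_polarCoord_target_fderiv_radial hf hfc,
    integral_polarCoord_target_fderiv_angular hf hfc, real_smul]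
  push_cast
  field_simp
  simp

theorem cauchyTransform_dbar {f : ℂ → ℂ} (hf : ContDiff ℝ 1 f) (hfc : HasCompactSupport f) :
    cauchyTransform (dbar f) = f := by
  ext w
  have hrefl : ∫ z, cauchyKernel z * dbar (fun t => f (w - t)) z = -f (w - 0) :=
    integral_cauchyKernel_mul_dbar (hf.comp (by fun_prop))
      (hfc.comp_homeomorph (Homeomorph.subLeft w))
  simp only [dbar_comp_const_sub (hf.differentiable one_ne_zero), mul_neg, integral_neg, sub_zero,
    neg_inj] at hrefl
  exact hrefl

lemma contDiff_cauchyTransform {n : ℕ∞} {f : ℂ → ℂ} (hf : ContDiff ℝ n f)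
    (hfc : HasCompactSupport f) : ContDiff ℝ n (cauchyTransform f) :=
  hfc.contDiff_convolution_right _ locallyIntegrable_cauchyKernel hf

lemma dbar_cauchyTransform_eq_cauchyTransform_dbar {f : ℂ → ℂ} (hf : ContDiff ℝ 1 f)
    (hfc : HasCompactSupport f) : dbar (cauchyTransform f) = cauchyTransform (dbar f) := by
  ext w
  have hcont : Continuous (fderiv ℝ f) := hf.continuous_fderiv one_ne_zero
  have hfderiv (x : ℂ) : fderiv ℝ (cauchyTransform f) w x =
      ∫ t, cauchyKernel t * fderiv ℝ f (w - t) x := by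
    rw [cauchyTransform, (hfc.hasFDerivAt_convolution_right _ locallyIntegrable_cauchyKernel hf
      w).fderiv, convolution_precompR_apply _ locallyIntegrable_cauchyKernel (hfc.fderiv ℝ) hcont]
    rfl
  have hint (x : ℂ) : Integrable fun t => cauchyKernel t * fderiv ℝ f (w - t) x :=
    (hfc.fderiv_apply ℝ x).convolutionExists_right (ContinuousLinearMap.mul ℝ ℂ)
      locallyIntegrable_cauchyKernel (by fun_prop) w
  rw [dbar, hfderiv, hfderiv, ← integral_const_mul, ← integral_add (hint 1) ((hint I).const_mul I),
    ← integral_const_mul, cauchyTransform_apply]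
  simp only [dbar]
  congr 1 with t
  ring

theorem dbar_cauchyTransform {f : ℂ → ℂ} (hf : ContDiff ℝ 1 f) (hfc : HasCompactSupport f) :
    dbar (cauchyTransform f) = f :=
  (dbar_cauchyTransform_eq_cauchyTransform_dbar hf hfc).trans (cauchyTransform_dbar hf hfc)

end Pompeiu

section Mollification

open scoped Pointwise

variable {E F : Type*} [NormedAddCommGroup E] [NormedSpace ℝ E] [FiniteDimensional ℝ E]
  [MeasurableSpace E] [BorelSpace E] {μ : Measure E} [μ.IsAddHaarMeasure] [NormedAddCommGroup F]
  [NormedSpace ℝ F] [CompleteSpace F] {ι : Type*} {l : Filter ι} {f : E → F} {M : ℝ}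

lemma norm_normed_convolution_le (φ : ContDiffBump (0 : E)) (hf : AEStronglyMeasurable f μ)
    (hM : ∀ x, ‖f x‖ ≤ M) (x : E) :
    ‖(φ.normed μ ⋆[ContinuousLinearMap.lsmul ℝ ℝ, μ] f) x‖ ≤ M := by
  rw [← dist_zero_right]
  exact dist_convolution_le ((norm_nonneg _).trans (hM x)) φ.support_normed_eq.subset
    φ.nonneg_normed φ.integral_normed hf fun y _ => by simpa using hM y

lemma tendsto_integral_norm_normed_convolution_sub [l.IsCountablyGenerated]
    {φ : ι → ContDiffBump (0 : E)} {C : ℝ} (hφ : Tendsto (fun i => (φ i).rOut) l (𝓝 0))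
    (hC : ∀ᶠ i in l, (φ i).rOut ≤ C * (φ i).rIn) (hf : Integrable f μ) (hM : ∀ x, ‖f x‖ ≤ M)
    (hfc : HasCompactSupport f) :
    Tendsto (fun i => ∫ x, ‖((φ i).normed μ ⋆[ContinuousLinearMap.lsmul ℝ ℝ, μ] f) x - f x‖ ∂μ) l
      (𝓝 0) := by
  set g : ι → E → F := fun i => (φ i).normed μ ⋆[ContinuousLinearMap.lsmul ℝ ℝ, μ] f
  have hgcont (i : ι) : Continuous (g i) :=
    (φ i).hasCompactSupport_normed.continuous_convolution_left _ (φ i).continuous_normed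
      hf.locallyIntegrable
  set K : Set E := closedBall 0 1 + tsupport f
  have hK : IsCompact K := (isCompact_closedBall 0 1).add hfc
  have hfK : Function.support f ⊆ K := fun x hx =>
    ⟨0, by simp, x, subset_tsupport f hx, zero_add x⟩
  have hgK {i : ι} (hi : (φ i).rOut < 1) : Function.support (g i) ⊆ K := by
    refine (support_convolution_subset _).trans (add_subset_add ?_ (subset_tsupport f))
    rw [(φ i).support_normed_eq]
    exact (ball_subset_ball hi.le).trans ball_subset_closedBall
  have hdom {i : ι} (hi : (φ i).rOut < 1) (x : E) :
      ‖g i x - f x‖ ≤ K.indicator (fun _ => M + M) x := by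
    by_cases hx : x ∈ K
    · rw [indicator_of_mem hx]
      exact norm_sub_le_of_le (norm_normed_convolution_le _ hf.aestronglyMeasurable hM x) (hM x)
    · rw [indicator_of_notMem hx, Function.notMem_support.1 (notMem_subset (hgK hi) hx),
        Function.notMem_support.1 (notMem_subset hfK hx), sub_zero, norm_zero]
  rw [← integral_zero E ℝ (μ := μ)]
  refine tendsto_integral_filter_of_dominated_convergence (K.indicator fun _ => M + M)
    (.of_forall fun i => ((hgcont i).aestronglyMeasurable.sub hf.aestronglyMeasurable).norm) ?_
    ((integrable_indicator_iff hK.measurableSet).2 (integrableOn_const hK.measure_lt_top.ne)) ?_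
  · filter_upwards [hφ.eventually_lt_const one_pos] with i hi
    exact .of_forall fun x => by simpa only [norm_norm] using hdom hi x
  · filter_upwards [ContDiffBump.ae_convolution_tendsto_right_of_locallyIntegrable hφ hC
      hf.locallyIntegrable] with x hx
    simpa using (hx.sub_const (f x)).norm

theorem exists_seq_contDiff_hasCompactSupport_tendsto_integral_norm_sub (hf : Integrable f μ)
    (hM : ∀ x, ‖f x‖ ≤ M) (hfc : HasCompactSupport f) :
    ∃ g : ℕ → E → F, (∀ n, ContDiff ℝ ∞ (g n)) ∧ (∀ n, HasCompactSupport (g n)) ∧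
      (∀ n x, ‖g n x‖ ≤ M) ∧ Tendsto (fun n => ∫ x, ‖g n x - f x‖ ∂μ) atTop (𝓝 0) := by
  let φ (n : ℕ) : ContDiffBump (0 : E) :=
    { rIn := 1 / ((n : ℝ) + 1)
      rOut := 2 * (1 / ((n : ℝ) + 1))
      rIn_pos := by positivity
      rIn_lt_rOut := lt_mul_of_one_lt_left (by positivity) one_lt_two }
  have hφ : Tendsto (fun n => (φ n).rOut) atTop (𝓝 0) := by
    simpa only [mul_zero] using (tendsto_one_div_add_atTop_nhds_zero_nat (𝕜 := ℝ)).const_mul 2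
  exact ⟨fun n => (φ n).normed μ ⋆[ContinuousLinearMap.lsmul ℝ ℝ, μ] f,
    fun n => (φ n).hasCompactSupport_normed.contDiff_convolution_left _ (φ n).contDiff_normed
      hf.locallyIntegrable,
    fun n => (φ n).hasCompactSupport_normed.convolution _ hfc,
    fun n => norm_normed_convolution_le (φ n) hf.aestronglyMeasurable hM,
    tendsto_integral_norm_normed_convolution_sub hφ (.of_forall fun _ => le_rfl) hf hM hfc⟩

end Mollification

section Similarity

variable {v a : ℂ → ℂ} {U : Set ℂ} {M : ℝ}

lemma dbar_mul_exp_neg_cauchyTransform {g : ℂ → ℂ} {z : ℂ} (hv : DifferentiableAt ℝ v z)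
    (hva : dbar v z = a z * v z) (hg : ContDiff ℝ 1 g) (hgc : HasCompactSupport g) :
    dbar (fun z => v z * exp (-cauchyTransform g z)) z =
      (a z - g z) * (v z * exp (-cauchyTransform g z)) := by
  have hT : DifferentiableAt ℝ (fun z => -cauchyTransform g z) z :=
    ((contDiff_cauchyTransform (n := 1) hg hgc).differentiable one_ne_zero z).neg
  rw [dbar_mul hv hT.cexp, dbar_cexp hT, dbar_neg, dbar_cauchyTransform hg hgc, hva]
  ring

lemma tendstoLocallyUniformlyOn_mul_exp_neg {ι : Type*} {l : Filter ι} {F : ι → ℂ → ℂ} {f : ℂ → ℂ}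
    (hU : IsOpen U) (hv : ContinuousOn v U) (hf : ContinuousOn f U)
    (hlim : TendstoUniformlyOn F f l U) :
    TendstoLocallyUniformlyOn (fun i z => v z * exp (-F i z)) (fun z => v z * exp (-f z)) l U := by
  have hexp : TendstoLocallyUniformlyOn (fun i z => exp (-F i z)) (fun z => exp (-f z)) l U := by
    refine (tendstoLocallyUniformlyOn_iff_forall_isCompact hU).2 fun K hKU hK => ?_
    exact (hlim.mono hKU).fun_neg.comp_cexp (hK.image_of_continuousOn
      (continuous_re.comp_continuousOn (hf.mono hKU).neg)).bddAbove
  have hconst : TendstoUniformlyOn (fun _ : ι => v) v l U :=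
    fun s hs => .of_forall fun _ _ _ => refl_mem_uniformity hs
  exact hconst.tendstoLocallyUniformlyOn.fun_mul₀ hexp hv (by fun_prop)

lemma tendsto_setIntegral_norm_mul {α ι : Type*} [MeasurableSpace α] {μ : Measure α} {l : Filter ι}
    {K : Set α} (hK : MeasurableSet K) {h u : ι → α → ℂ} (hh : ∀ i, Integrable (h i) μ)
    (hlim : Tendsto (fun i => ∫ x, ‖h i x‖ ∂μ) l (𝓝 0)) {C : ℝ}
    (hu : ∀ᶠ i in l, ∀ x ∈ K, ‖u i x‖ ≤ C) :
    Tendsto (fun i => ∫ x in K, ‖h i x * u i x‖ ∂μ) l (𝓝 0) := by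
  have hbound : Tendsto (fun i => (∫ x, ‖h i x‖ ∂μ) * |C|) l (𝓝 0) := by
    simpa using hlim.mul_const |C|
  refine squeeze_zero' (.of_forall fun i => integral_nonneg fun x => norm_nonneg _) ?_ hbound
  filter_upwards [hu] with i hi
  calc ∫ x in K, ‖h i x * u i x‖ ∂μ ≤ ∫ x in K, ‖h i x‖ * |C| ∂μ := by
        refine integral_mono_of_nonneg (.of_forall fun x => norm_nonneg _)
          ((hh i).norm.mul_const _).integrableOn ?_
        filter_upwards [ae_restrict_mem hK] with x hx
        rw [norm_mul]
        gcongr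
        exact (hi x hx).trans (le_abs_self C)
    _ ≤ ∫ x, ‖h i x‖ * |C| ∂μ :=
        setIntegral_le_integral ((hh i).norm.mul_const _) (.of_forall fun x => by positivity)
    _ = (∫ x, ‖h i x‖ ∂μ) * |C| := integral_mul_const _ _

lemma continuous_cauchyTransform (ha : Integrable a) (hM : ∀ z, ‖a z‖ ≤ M)
    (hac : HasCompactSupport a) : Continuous (cauchyTransform a) := by
  obtain ⟨g, hg, hgc, hgM, hga⟩ :=
    exists_seq_contDiff_hasCompactSupport_tendsto_integral_norm_sub ha hM hac
  exact (tendstoUniformly_cauchyTransform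
    (fun n => (hg n).continuous.integrable_of_hasCompactSupport (hgc n)) hgM ha hM hga).continuous
    (.of_forall fun n => (contDiff_cauchyTransform (hg n) (hgc n)).continuous)

theorem differentiableOn_mul_exp_neg_cauchyTransform (hU : IsOpen U) (hv : ContDiffOn ℝ 1 v U)
    (ha : Integrable a) (hM : ∀ z, ‖a z‖ ≤ M) (hac : HasCompactSupport a)
    (hva : ∀ z ∈ U, dbar v z = a z * v z) :
    DifferentiableOn ℂ (fun z => v z * exp (-cauchyTransform a z)) U := by
  obtain ⟨g, hg, hgc, hgM, hga⟩ :=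
    exists_seq_contDiff_hasCompactSupport_tendsto_integral_norm_sub ha hM hac
  have hgi (n : ℕ) : Integrable (g n) := (hg n).continuous.integrable_of_hasCompactSupport (hgc n)
  have hT (n : ℕ) : ContDiff ℝ 1 (cauchyTransform (g n)) :=
    contDiff_cauchyTransform (n := 1) ((hg n).of_le (by simp)) (hgc n)
  have hTlim : TendstoUniformly (fun n => cauchyTransform (g n)) (cauchyTransform a) atTop :=
    tendstoUniformly_cauchyTransform hgi hgM ha hM hga
  have hTa : Continuous (cauchyTransform a) := continuous_cauchyTransform ha hM hac
  have hulim : TendstoLocallyUniformlyOn (fun n z => v z * exp (-cauchyTransform (g n) z))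
      (fun z => v z * exp (-cauchyTransform a z)) atTop U :=
    tendstoLocallyUniformlyOn_mul_exp_neg hU hv.continuousOn hTa.continuousOn
      hTlim.tendstoUniformlyOn
  refine differentiableOn_of_tendstoLocallyUniformlyOn_of_tendsto_integral_norm_dbar hU
    (fun n => hv.mul (hT n).neg.cexp.contDiffOn) hulim fun K hKU hK => ?_
  obtain ⟨C, hC⟩ : ∃ C, ∀ z ∈ K, ‖v z * exp (-cauchyTransform a z)‖ ≤ C :=
    hK.exists_bound_of_continuousOn ((hv.continuousOn.mul hTa.neg.cexp.continuousOn).mono hKU)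
  have hbound : ∀ᶠ n in atTop, ∀ z ∈ K, ‖v z * exp (-cauchyTransform (g n) z)‖ ≤ C + 1 := by
    have hunif := (tendstoLocallyUniformlyOn_iff_forall_isCompact hU).1 hulim K hKU hK
    filter_upwards [Metric.tendstoUniformlyOn_iff.1 hunif 1 one_pos] with n hn z hz
    have hn' := hn z hz
    rw [dist_comm, dist_eq_norm] at hn'
    linarith [norm_le_norm_add_norm_sub' (v z * exp (-cauchyTransform (g n) z))
      (v z * exp (-cauchyTransform a z)), hC z hz]
  have hdbar (n : ℕ) : ∫ z in K, ‖dbar (fun z => v z * exp (-cauchyTransform (g n) z)) z‖ =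
      ∫ z in K, ‖(a z - g n z) * (v z * exp (-cauchyTransform (g n) z))‖ :=
    setIntegral_congr_fun hK.measurableSet fun z hz => by
      have hvz := (hv.contDiffAt (hU.mem_nhds (hKU hz))).differentiableAt one_ne_zero
      simp only [dbar_mul_exp_neg_cauchyTransform hvz (hva z (hKU hz)) ((hg n).of_le (by simp))
        (hgc n)]
  simp only [hdbar]
  refine tendsto_setIntegral_norm_mul hK.measurableSet (fun n => ha.sub (hgi n)) ?_ hbound
  simpa only [Pi.sub_apply, norm_sub_rev] using hga

theorem exists_continuous_differentiableOn_mul_exp_neg (hU : IsOpen U) (hUb : Bornology.IsBounded U)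
    (hv : ContDiffOn ℝ 1 v U) (hM : ∀ z ∈ U, ‖dbar v z‖ ≤ M * ‖v z‖) :
    ∃ φ : ℂ → ℂ, Continuous φ ∧ DifferentiableOn ℂ (fun z => v z * exp (-φ z)) U := by
  set a : ℂ → ℂ := U.indicator fun z => dbar v z / v z with ha_def
  have haM (z : ℂ) : ‖a z‖ ≤ |M| := by
    by_cases hz : z ∈ U
    · rw [ha_def, indicator_of_mem hz, norm_div]
      exact div_le_of_le_mul₀ (norm_nonneg _) (abs_nonneg M)
        ((hM z hz).trans (mul_le_mul_of_nonneg_right (le_abs_self M) (norm_nonneg _)))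
    · rw [ha_def, indicator_of_notMem hz, norm_zero]
      exact abs_nonneg M
  have hac : HasCompactSupport a :=
    .of_support_subset_isCompact hUb.isCompact_closure
      (support_indicator_subset.trans subset_closure)
  have ha : Integrable a := by
    have hmeas : AEStronglyMeasurable (fun z => dbar v z / v z) (volume.restrict U) :=
      ((continuousOn_dbar hv hU).aestronglyMeasurable hU.measurableSet).div₀
        (hv.continuousOn.aestronglyMeasurable hU.measurableSet)
    refine (integrable_indicator_iff hU.measurableSet).2
      (.of_bound hUb.measure_lt_top hmeas |M| ?_)
    filter_upwards [ae_restrict_mem hU.measurableSet] with z hz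
    simpa only [ha_def, indicator_of_mem hz] using haM z
  refine ⟨cauchyTransform a, continuous_cauchyTransform ha haM hac,
    differentiableOn_mul_exp_neg_cauchyTransform hU hv ha haM hac fun z hz => ?_⟩
  have hdbar : v z = 0 → dbar v z = 0 := fun hvz => by simpa [hvz] using hM z hz
  rw [ha_def, indicator_of_mem hz, div_mul_cancel_of_imp hdbar]

end Similarity

section ZeroSet

lemma eventually_eq_zero_or_eventually_ne_zero_of_dbar_isBigO {v : ℂ → ℂ} {z₀ : ℂ}
    (hv : ContDiffAt ℝ 1 v z₀) (hO : dbar v =O[𝓝 z₀] v) :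
    (∀ᶠ z in 𝓝 z₀, v z = 0) ∨ ∀ᶠ z in 𝓝[≠] z₀, v z ≠ 0 := by
  obtain ⟨M, hM⟩ := hO.bound
  obtain ⟨r, hr, hball⟩ := Metric.eventually_nhds_iff_ball.1 (hM.and (hv.eventually (by simp)))
  obtain ⟨φ, -, hφ⟩ := exists_continuous_differentiableOn_mul_exp_neg isOpen_ball isBounded_ball
    (fun z hz => (hball z hz).2.contDiffWithinAt) fun z hz => (hball z hz).1
  have han : AnalyticAt ℂ (fun z => v z * exp (-φ z)) z₀ := hφ.analyticAt (ball_mem_nhds z₀ hr)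
  simpa only [ne_eq, mul_eq_zero, exp_ne_zero, or_false] using
    han.eventually_eq_zero_or_eventually_ne_zero

lemma forall_of_isPreconnected_of_eventually {X : Type*} [TopologicalSpace X] {U : Set X}
    {p : X → Prop} (hU : IsPreconnected U)
    (hp : ∀ x ∈ U, (∀ᶠ y in 𝓝 x, p y) ∨ ∀ᶠ y in 𝓝[≠] x, ¬p y) {x₀ : X} (hx₀ : x₀ ∈ U)
    (hpx₀ : ∀ᶠ y in 𝓝 x₀, p y) : ∀ x ∈ U, p x := by
  have hsub : U ⊆ {x | ∀ᶠ y in 𝓝 x, p y} := by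
    refine hU.subset_of_closure_inter_subset isOpen_setOfPred_eventually_nhds ⟨x₀, hx₀, hpx₀⟩ ?_
    rintro x ⟨hxc, hxU⟩
    refine (hp x hxU).elim id fun hnot => ?_
    obtain ⟨y, hy, hyp⟩ :=
      ((mem_closure_iff_frequently.1 hxc).and_eventually (eventually_nhdsWithin_iff.1 hnot)).exists
    by_cases hyx : y = x
    · exact hyx ▸ hy
    · exact absurd hy.self_of_nhds (hyp hyx)
  exact fun x hx => (hsub hx).self_of_nhds

lemma isBigO_dbar_of_CR_type_equation {v C₁ C₂ : ℂ → ℂ} {Ω : Set ℂ} (hΩ : IsOpen Ω)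
    (hC₁ : ContinuousOn C₁ Ω) (hC₂ : ContinuousOn C₂ Ω)
    (heq : ∀ z ∈ Ω, dbar v z + C₁ z * v z + C₂ z * conj (v z) = 0) :
    ∀ z ∈ Ω, dbar v =O[𝓝 z] v := by
  intro z₀ hz₀
  have hdbar : (fun z => -(C₁ z * v z + C₂ z * conj (v z))) =ᶠ[𝓝 z₀] dbar v := by
    filter_upwards [hΩ.mem_nhds hz₀] with z hz
    linear_combination -heq z hz
  have hconj : (fun z => conj (v z)) =O[𝓝 z₀] v :=
    .of_bound 1 (.of_forall fun z => by rw [norm_conj, one_mul])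
  have h₁ : (fun z => C₁ z * v z) =O[𝓝 z₀] v := by
    simpa using ((hC₁.continuousAt (hΩ.mem_nhds hz₀)).isBigO_one ℂ).mul
      (Asymptotics.isBigO_refl v _)
  have h₂ : (fun z => C₂ z * conj (v z)) =O[𝓝 z₀] v := by
    simpa using ((hC₂.continuousAt (hΩ.mem_nhds hz₀)).isBigO_one ℂ).mul hconj
  exact (h₁.add h₂).neg_left.congr' hdbar .rfl

end ZeroSet

theorem zeros_isolated_of_CR_type_equation_general {Ω : Set ℂ} (hΩ : IsOpen Ω)
    (hconn : IsPreconnected Ω) {v : ℂ → ℂ} (hv : ContDiffOn ℝ 1 v Ω)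
    (hO : ∀ z ∈ Ω, dbar v =O[𝓝 z] v) (hne : ∃ z ∈ Ω, v z ≠ 0) {z₀ : ℂ} (hz₀ : z₀ ∈ Ω) :
    ∃ r : ℝ, 0 < r ∧ ball z₀ r ⊆ Ω ∧ ∀ z ∈ ball z₀ r, z ≠ z₀ → v z ≠ 0 := by
  have hdich (z : ℂ) (hz : z ∈ Ω) : (∀ᶠ w in 𝓝 z, v w = 0) ∨ ∀ᶠ w in 𝓝[≠] z, v w ≠ 0 :=
    eventually_eq_zero_or_eventually_ne_zero_of_dbar_isBigO (hv.contDiffAt (hΩ.mem_nhds hz))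
      (hO z hz)
  obtain ⟨z₁, hz₁, hvz₁⟩ := hne
  have hpunctured : ∀ᶠ z in 𝓝[≠] z₀, v z ≠ 0 := (hdich z₀ hz₀).resolve_left fun hzero =>
    hvz₁ (forall_of_isPreconnected_of_eventually hconn hdich hz₀ hzero z₁ hz₁)
  obtain ⟨r, hr, hball⟩ := Metric.eventually_nhds_iff_ball.1
    ((hΩ.eventually_mem hz₀).and (eventually_nhdsWithin_iff.1 hpunctured))
  exact ⟨r, hr, fun z hz => (hball z hz).1, fun z hz => (hball z hz).2⟩

/-- for a solution of a Cauchy–Riemann type equation on a connected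
open set which is not identically zero, every zero is isolated. -/
theorem zeros_isolated_of_CR_type_equation
    (Ω : Set ℂ) (hΩ : IsOpen Ω) (hconn : IsConnected Ω)
    (C₁ C₂ : ℂ → ℂ)
    (hC₁ : ContinuousOn C₁ Ω) (hC₂ : ContinuousOn C₂ Ω)
    (v : ℂ → ℂ) (hv : ContDiffOn ℝ 1 v Ω)
    (heq : ∀ z ∈ Ω, dbar v z + C₁ z * v z + C₂ z * (starRingEnd ℂ) (v z) = 0)
    (hne : ∃ z ∈ Ω, v z ≠ 0) :
    ∀ z₀ ∈ Ω, v z₀ = 0 →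
      ∃ r : ℝ, 0 < r ∧ ball z₀ r ⊆ Ω ∧
        ∀ z ∈ ball z₀ r, z ≠ z₀ → v z ≠ 0 := by
  exact fun z₀ hz₀ _ => zeros_isolated_of_CR_type_equation_general hΩ hconn.isPreconnected hv
    (isBigO_dbar_of_CR_type_equation hΩ hC₁ hC₂ heq) hne hz₀
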